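/- For every z ∈ ℝ and every direction δ ∈ {−1, 1}, the one-sided directional derivative of the partial sorted ℓ1 norm H exists and is given by: H'(z; δ) = Σ_{j ∈ C(ε_c)} λ_{(j)^-_{ε_c}} if z = 0; H'(z; δ) = sign(z)·δ·Σ_{j ∈ C(z + ε_c δ)} λ_{(j)^-_{z + ε_c δ}} if z ≠ 0 and |z| ∈ c^{∖k}; and H'(z; δ) = sign(z)·δ·Σ_{j ∈ C(z)} λ_{(j)^-_z} otherwise. -/

import Mathlib

open Finset Filter

noncomputable section

/-- The sign of a real number, with the convention `sgn 0 = 1`. -/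
def sgn (t : ℝ) : ℝ := if t < 0 then -1 else 1

/-- A permutation sorting the absolute values of `β` in nonincreasing order. -/
def sortPerm {p : ℕ} (β : Fin p → ℝ) : Equiv.Perm (Fin p) :=
  (Fin.revPerm).trans (Tuple.sort fun j => |β j|)

/-- The sorted ℓ₁ norm `J(β) = Σ_j λ_j |β|_(j)`. -/
def sortedL1 {p : ℕ} (lam β : Fin p → ℝ) : ℝ :=
  ∑ j, lam j * |β (sortPerm β j)|

/-- `β(z)`: the vector obtained from `β` by replacing entries of the cluster
`{i : |β i| = ck}` by `sign(β i) * z`. -/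
def cupd {p : ℕ} (β : Fin p → ℝ) (ck z : ℝ) : Fin p → ℝ :=
  fun i => if |β i| = ck then sgn (β i) * z else β i

/-- The partial sorted ℓ₁ norm `H(z) = J(β(z))`. -/
def Hfun {p : ℕ} (lam β : Fin p → ℝ) (ck : ℝ) (z : ℝ) : ℝ :=
  sortedL1 lam (cupd β ck z)

/-- `S(w) = Σ_{j ∈ C(w)} λ_{(j)⁻_w}`, where `C(w) = {j : |β(w)_j| = |w|}`. -/
def Sval {p : ℕ} (lam β : Fin p → ℝ) (ck : ℝ) (w : ℝ) : ℝ :=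
  ∑ j, if |cupd β ck w j| = |w| then lam ((sortPerm (cupd β ck w))⁻¹ j) else 0

/-- squared Euclidean norm -/
def sqnorm {n : ℕ} (v : Fin n → ℝ) : ℝ := ∑ i, (v i) ^ 2

/-- `G(z) = (1/2)‖y − Xβ(z)‖² + H(z)`. -/
def Gfun {n p : ℕ} (lam : Fin p → ℝ) (X : Matrix (Fin n) (Fin p) ℝ) (y : Fin n → ℝ)
    (β : Fin p → ℝ) (ck : ℝ) (z : ℝ) : ℝ :=
  (1/2) * sqnorm (fun i => y i - ∑ j, X i j * cupd β ck z j) + Hfun lam β ck z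

/-- `x̃ = Σ_{j ∈ C_k} sign(β_j) X_{:j}`. -/
def xtil {n p : ℕ} (X : Matrix (Fin n) (Fin p) ℝ) (β : Fin p → ℝ) (ck : ℝ) : Fin n → ℝ :=
  fun i => ∑ j, if |β j| = ck then sgn (β j) * X i j else 0

/-- `γ = c_k ω + x̃ᵀ r` where `r = y − Xβ` and `ω = ‖x̃‖²`. -/
def gam {n p : ℕ} (X : Matrix (Fin n) (Fin p) ℝ) (y : Fin n → ℝ) (β : Fin p → ℝ) (ck : ℝ) : ℝ :=
  ck * sqnorm (xtil X β ck) + ∑ i, xtil X β ck i * (y i - ∑ j, X i j * β j)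

end

/-!
Between two consecutive absolute values of entries outside the cluster, the vectors `β(w)` are all
sorted by one permutation, so there `H(w)` is affine in `|w|`, and its slope is the sum of the
weights that this permutation assigns to the cluster. This persists at the endpoints of the
interval, since permuting ties does not change the sorted norm. Hence the derivative at `z` in
direction `δ` is the slope of `|·|` times the weight sum at any point of the interval which
`|z + δ h|` enters: at `z` itself if `|z|` is interior, and at distance `ε` from `z` if `z = 0` or
`|z|` is the value of another cluster.
-/

section Sorting

variable {p : ℕ} {lam u v : Fin p → ℝ}

theorem antitone_abs_comp_sortPerm (v : Fin p → ℝ) : Antitone fun j => |v (sortPerm v j)| :=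
  fun _ _ hij => Tuple.monotone_sort (fun j => |v j|) (Fin.rev_le_rev.mpr hij)

theorem abs_comp_sortPerm_eq_of_antitone {σ : Equiv.Perm (Fin p)}
    (hσ : Antitone fun j => |v (σ j)|) (j : Fin p) : |v (sortPerm v j)| = |v (σ j)| := by
  have hmono : Monotone ((fun j => |v j|) ∘ Fin.revPerm.trans σ) := fun _ _ hij =>
    hσ (Fin.rev_le_rev.mpr hij)
  have hsort := Tuple.comp_sort_eq_comp_iff_monotone.mpr hmono
  simpa [sortPerm] using (congrFun hsort j.rev).symm

theorem sortedL1_eq_sum_of_antitone {σ : Equiv.Perm (Fin p)}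
    (hσ : Antitone fun j => |v (σ j)|) : sortedL1 lam v = ∑ j, lam (σ⁻¹ j) * |v j| := by
  rw [← Equiv.sum_comp σ]
  simp [sortedL1, abs_comp_sortPerm_eq_of_antitone hσ]

theorem sortedL1_eq_sum_of_abs_le_imp (h : ∀ i j, |u i| ≤ |u j| → |v i| ≤ |v j|) :
    sortedL1 lam v = ∑ j, lam ((sortPerm u)⁻¹ j) * |v j| :=
  sortedL1_eq_sum_of_antitone fun _ _ hij => h _ _ (antitone_abs_comp_sortPerm u hij)

end Sorting

section Sign

theorem sgn_eq_one_or_neg_one (t : ℝ) : sgn t = 1 ∨ sgn t = -1 := by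
  unfold sgn
  split_ifs <;> simp

theorem abs_sgn_mul (t z : ℝ) : |sgn t * z| = |z| := by
  rcases sgn_eq_one_or_neg_one t with h | h <;> simp [h]

theorem abs_add_eq_abs_add_sgn_mul {z t : ℝ} (ht : |t| ≤ |z|) : |z + t| = |z| + sgn z * t := by
  unfold sgn
  split_ifs <;> grind

theorem sgn_mul_eq_one_or_neg_one (z : ℝ) {δ : ℝ} (hδ : δ = 1 ∨ δ = -1) :
    sgn z * δ = 1 ∨ sgn z * δ = -1 := by
  rcases sgn_eq_one_or_neg_one z with h | h <;> rcases hδ with rfl | rfl <;> simp [h]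

theorem abs_mul_of_eq_one_or_neg_one {δ h : ℝ} (hδ : δ = 1 ∨ δ = -1) (hh : 0 ≤ h) :
    |δ * h| = h := by
  rcases hδ with rfl | rfl <;> simp [abs_of_nonneg hh]

theorem abs_add_mul_eq_abs_add_sgn_mul {z δ h : ℝ} (hδ : δ = 1 ∨ δ = -1) (hh : 0 ≤ h)
    (hhz : h ≤ |z|) : |z + δ * h| = |z| + sgn z * δ * h := by
  have habs : |δ * h| ≤ |z| := (abs_mul_of_eq_one_or_neg_one hδ hh).trans_le hhz
  rw [abs_add_eq_abs_add_sgn_mul habs, mul_assoc]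

end Sign

section Gap

variable {p : ℕ} {lam β : Fin p → ℝ} {ck w₀ w w' : ℝ}

theorem abs_cupd (β : Fin p → ℝ) (ck w : ℝ) (j : Fin p) :
    |cupd β ck w j| = if |β j| = ck then |w| else |β j| := by
  unfold cupd
  split_ifs
  · exact abs_sgn_mul _ _
  · rfl

theorem Sval_eq_sum_cluster (hw₀ : ∀ j, |β j| ≠ ck → |β j| ≠ |w₀|) :
    Sval lam β ck w₀ =
      ∑ j, if |β j| = ck then lam ((sortPerm (cupd β ck w₀))⁻¹ j) else 0 := by
  refine Finset.sum_congr rfl fun j _ => ?_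
  by_cases hj : |β j| = ck
  · simp [abs_cupd, hj]
  · simp [abs_cupd, hj, hw₀ j hj]

/-- The values `|β j|` outside the cluster at `ck` cut the half-line `[0, ∞)` into gaps.
`SameGap β ck w₀ w` says that `|w₀|` lies in the interior of a gap and `|w|` in the closure of the
same gap, so that a permutation sorting `β(w₀)` also sorts `β(w)`. -/
def SameGap (β : Fin p → ℝ) (ck w₀ w : ℝ) : Prop :=
  ∀ j, |β j| ≠ ck → (|w₀| < |β j| ∧ |w| ≤ |β j|) ∨ (|β j| < |w₀| ∧ |β j| ≤ |w|)

theorem SameGap.abs_ne (h : SameGap β ck w₀ w) {j : Fin p} (hj : |β j| ≠ ck) :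
    |β j| ≠ |w₀| :=
  (h j hj).elim (fun h => h.1.ne') fun h => h.1.ne

theorem SameGap.abs_cupd_le (h : SameGap β ck w₀ w) {i j : Fin p}
    (hij : |cupd β ck w₀ i| ≤ |cupd β ck w₀ j|) : |cupd β ck w i| ≤ |cupd β ck w j| := by
  rw [abs_cupd, abs_cupd] at hij ⊢
  split_ifs at hij ⊢ with hi hj hj
  · exact le_rfl
  · rcases h j hj with ⟨-, hle⟩ | ⟨hlt, -⟩
    exacts [hle, absurd hij hlt.not_ge]
  · rcases h i hi with ⟨hlt, -⟩ | ⟨-, hle⟩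
    exacts [absurd hij hlt.not_ge, hle]
  · exact hij

theorem SameGap.Hfun_eq_sum (h : SameGap β ck w₀ w) :
    Hfun lam β ck w = ∑ j, lam ((sortPerm (cupd β ck w₀))⁻¹ j) * |cupd β ck w j| :=
  sortedL1_eq_sum_of_abs_le_imp fun _ _ => h.abs_cupd_le

theorem SameGap.Hfun_sub (h : SameGap β ck w₀ w) (h' : SameGap β ck w₀ w') :
    Hfun lam β ck w - Hfun lam β ck w' = (|w| - |w'|) * Sval lam β ck w₀ := by
  rw [h.Hfun_eq_sum, h'.Hfun_eq_sum, Sval_eq_sum_cluster fun _ => h.abs_ne,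
    ← Finset.sum_sub_distrib, Finset.mul_sum]
  refine Finset.sum_congr rfl fun j _ => ?_
  rw [abs_cupd, abs_cupd]
  split_ifs <;> ring

theorem eventually_sameGap {z : ℝ} (hz : ∀ j, |β j| ≠ ck → |β j| ≠ |z|) :
    ∀ᶠ w in nhds z, SameGap β ck z w := by
  refine eventually_all.mpr fun j => eventually_imp_distrib_left.mpr fun hj => ?_
  rcases (hz j hj).lt_or_gt with hlt | hgt
  · filter_upwards [continuous_abs.continuousAt.eventually_const_lt hlt] with w hw
    exact Or.inr ⟨hlt, hw.le⟩
  · filter_upwards [continuous_abs.continuousAt.eventually_lt_const hgt] with w hw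
    exact Or.inl ⟨hgt, hw.le⟩

theorem sameGap_of_abs_eq_add_mul {a s t ε : ℝ} (hs : s = 1 ∨ s = -1) (hε : 0 < ε)
    (hsep : ∀ j, |β j| ≠ ck → |β j| ≠ a → ε < |(|β j| - a)|)
    (hw₀ : |w₀| = a + s * ε) (ht : t ∈ Set.Icc 0 ε) (hw : |w| = a + s * t) :
    SameGap β ck w₀ w := by
  obtain ⟨ht₀, htε⟩ := ht
  intro j hj
  rw [hw₀, hw]
  rcases eq_or_ne (|β j|) a with heq | hne
  · rcases hs with rfl | rfl
    · exact Or.inr ⟨by linarith, by linarith⟩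
    · exact Or.inl ⟨by linarith, by linarith⟩
  · rcases lt_abs.mp (hsep j hj hne) with habove | hbelow
    · exact Or.inl (by rcases hs with rfl | rfl <;> constructor <;> linarith)
    · exact Or.inr (by rcases hs with rfl | rfl <;> constructor <;> linarith)

end Gap

section DirectionalDerivative

/-- `HasDirDerivAt F d z δ` says that the one-sided directional derivative `F'(z; δ)` exists and
equals `d`. -/
def HasDirDerivAt (F : ℝ → ℝ) (d z δ : ℝ) : Prop :=
  Tendsto (fun h : ℝ => (F (z + δ * h) - F z) / h) (nhdsWithin 0 (Set.Ioi 0)) (nhds d)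

theorem hasDirDerivAt_of_eventually_sub_eq {F : ℝ → ℝ} {d z δ : ℝ}
    (hF : ∀ᶠ h in nhdsWithin (0 : ℝ) (Set.Ioi 0), F (z + δ * h) - F z = h * d) :
    HasDirDerivAt F d z δ := by
  refine tendsto_const_nhds.congr' ?_
  filter_upwards [hF, self_mem_nhdsWithin] with h hh hpos
  rw [hh, mul_div_cancel_left₀ d (ne_of_gt hpos)]

variable {p : ℕ} {lam β : Fin p → ℝ} {ck w₀ z δ s ε : ℝ}

theorem hasDirDerivAt_Hfun_of_sameGap (hz : SameGap β ck w₀ z)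
    (hgap : ∀ᶠ h in nhdsWithin (0 : ℝ) (Set.Ioi 0), SameGap β ck w₀ (z + δ * h))
    (habs : ∀ᶠ h in nhdsWithin (0 : ℝ) (Set.Ioi 0), |z + δ * h| = |z| + s * h) :
    HasDirDerivAt (Hfun lam β ck) (s * Sval lam β ck w₀) z δ := by
  refine hasDirDerivAt_of_eventually_sub_eq ?_
  filter_upwards [hgap, habs] with h hgap habs
  rw [hgap.Hfun_sub hz, habs]
  ring

theorem hasDirDerivAt_Hfun_of_separated (hs : s = 1 ∨ s = -1) (hε : 0 < ε)
    (hsep : ∀ j, |β j| ≠ ck → |β j| ≠ |z| → ε < |(|β j| - |z|)|)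
    (hw₀ : |w₀| = |z| + s * ε) (habs : ∀ h ∈ Set.Icc 0 ε, |z + δ * h| = |z| + s * h) :
    HasDirDerivAt (Hfun lam β ck) (s * Sval lam β ck w₀) z δ := by
  have hgap : ∀ h ∈ Set.Icc 0 ε, SameGap β ck w₀ (z + δ * h) := fun h hh =>
    sameGap_of_abs_eq_add_mul hs hε hsep hw₀ hh (habs h hh)
  have hsmall : ∀ᶠ h in nhdsWithin (0 : ℝ) (Set.Ioi 0), h ∈ Set.Icc 0 ε := Icc_mem_nhdsGT hε
  have hz : SameGap β ck w₀ z := by simpa using hgap 0 (Set.left_mem_Icc.mpr hε.le)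
  exact hasDirDerivAt_Hfun_of_sameGap hz (hsmall.mono hgap) (hsmall.mono habs)

theorem hasDirDerivAt_Hfun_zero (hδ : δ = 1 ∨ δ = -1) (hε : 0 < ε)
    (hsep : ∀ j, |β j| ≠ ck → β j ≠ 0 → ε < |β j|) :
    HasDirDerivAt (Hfun lam β ck) (Sval lam β ck ε) 0 δ := by
  rw [← one_mul (Sval lam β ck ε)]
  refine hasDirDerivAt_Hfun_of_separated (Or.inl rfl) hε (by simpa using hsep)
    (by simp [abs_of_pos hε]) fun h hh => ?_
  simp [abs_mul_of_eq_one_or_neg_one hδ hh.1]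

theorem hasDirDerivAt_Hfun_of_lt_abs (hδ : δ = 1 ∨ δ = -1) (hε : 0 < ε) (hεz : ε < |z|)
    (hsep : ∀ j, |β j| ≠ ck → |β j| ≠ |z| → ε < |(|β j| - |z|)|) :
    HasDirDerivAt (Hfun lam β ck) (sgn z * δ * Sval lam β ck (z + ε * δ)) z δ := by
  have habs : ∀ h ∈ Set.Icc 0 ε, |z + δ * h| = |z| + sgn z * δ * h := fun h hh =>
    abs_add_mul_eq_abs_add_sgn_mul hδ hh.1 (hh.2.trans hεz.le)
  rw [mul_comm ε δ]
  exact hasDirDerivAt_Hfun_of_separated (sgn_mul_eq_one_or_neg_one z hδ) hε hsep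
    (habs ε (Set.right_mem_Icc.mpr hε.le)) habs

theorem hasDirDerivAt_Hfun_of_forall_abs_ne (hδ : δ = 1 ∨ δ = -1) (hz : z ≠ 0)
    (hne : ∀ j, |β j| ≠ ck → |β j| ≠ |z|) :
    HasDirDerivAt (Hfun lam β ck) (sgn z * δ * Sval lam β ck z) z δ := by
  have hgap := eventually_sameGap hne
  have hline : Tendsto (fun h : ℝ => z + δ * h) (nhdsWithin 0 (Set.Ioi 0)) (nhds z) := by
    have hcont : Continuous fun h : ℝ => z + δ * h := by fun_prop
    exact (hcont.tendsto' 0 z (by simp)).mono_left nhdsWithin_le_nhds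
  refine hasDirDerivAt_Hfun_of_sameGap hgap.self_of_nhds (hline.eventually hgap) ?_
  filter_upwards [Icc_mem_nhdsGT (abs_pos.mpr hz)] with h hh
  exact abs_add_mul_eq_abs_add_sgn_mul hδ hh.1 hh.2

end DirectionalDerivative

theorem directional_derivative_partial_sorted_l1_general {p : ℕ} {ι : Type*}
    (lam β : Fin p → ℝ) (c : ι → ℝ) (h_cover : ∀ j, ∃ i, |β j| = c i) (k : ι)
    {ε : ℝ} (hε_pos : 0 < ε)
    (hε_sep : ∀ i j, i ≠ k → j ≠ k → i ≠ j → ε < |c i - c j|)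
    (hε_min : ∀ i, i ≠ k → c i ≠ 0 → ε < c i)
    (z : ℝ) [Decidable (∃ i, i ≠ k ∧ |z| = c i)] {δ : ℝ} (hδ : δ = 1 ∨ δ = -1) :
    HasDirDerivAt (Hfun lam β (c k))
      (if z = 0 then Sval lam β (c k) ε
       else if ∃ i, i ≠ k ∧ |z| = c i then sgn z * δ * Sval lam β (c k) (z + ε * δ)
       else sgn z * δ * Sval lam β (c k) z) z δ := by
  have h_other : ∀ j, |β j| ≠ c k → ∃ i, i ≠ k ∧ |β j| = c i := fun j hj =>
    (h_cover j).imp fun i hi => ⟨fun hik => hj (hik ▸ hi), hi⟩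
  split_ifs with hz hzc
  · subst hz
    refine hasDirDerivAt_Hfun_zero hδ hε_pos fun j hj hj₀ => ?_
    obtain ⟨i, hik, hi⟩ := h_other j hj
    exact hi ▸ hε_min i hik (hi ▸ abs_ne_zero.mpr hj₀)
  · obtain ⟨i, hik, hi⟩ := hzc
    have hεz : ε < |z| := hi ▸ hε_min i hik (hi ▸ abs_ne_zero.mpr hz)
    refine hasDirDerivAt_Hfun_of_lt_abs hδ hε_pos hεz fun j hj hjz => ?_
    obtain ⟨l, hlk, hl⟩ := h_other j hj
    rw [hl, hi] at hjz ⊢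
    exact hε_sep l i hlk hik (ne_of_apply_ne c hjz)
  · refine hasDirDerivAt_Hfun_of_forall_abs_ne hδ hz fun j hj hjz => hzc ?_
    obtain ⟨i, hik, hi⟩ := h_other j hj
    exact ⟨i, hik, hjz ▸ hi⟩

open scoped Classical in
/-- Theorem: directional derivative of the partial sorted ℓ₁ norm.
For every `z ∈ ℝ` and direction `δ ∈ {−1, 1}`, the one-sided directional derivative of `H`
exists and equals the displayed case formula. -/
theorem directional_derivative_partial_sorted_l1
    {p m : ℕ} (hp : 0 < p) (hm : 0 < m)
    (lam : Fin p → ℝ)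
    (hlam_mono : ∀ i j : Fin p, i ≤ j → lam j ≤ lam i)
    (hlam_nonneg : ∀ j, 0 ≤ lam j)
    (β : Fin p → ℝ) (c : Fin m → ℝ)
    (hc_anti : StrictAnti c) (hc_nonneg : ∀ i, 0 ≤ c i)
    (h_attain : ∀ i, ∃ j, |β j| = c i)
    (h_cover : ∀ j, ∃ i, |β j| = c i)
    (k : Fin m)
    (ε : ℝ) (hε_pos : 0 < ε)
    (hε_sep : ∀ i j, i ≠ j → ε < |c i - c j|)
    (hε_min : ∀ i, c i ≠ 0 → ε < c i)
    (z δ : ℝ) (hδ : δ = 1 ∨ δ = -1) :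
    Filter.Tendsto
      (fun h : ℝ => (Hfun lam β (c k) (z + δ * h) - Hfun lam β (c k) z) / h)
      (nhdsWithin 0 (Set.Ioi 0))
      (nhds
        (if z = 0 then Sval lam β (c k) ε
         else if ∃ i, i ≠ k ∧ |z| = c i then
           sgn z * δ * Sval lam β (c k) (z + ε * δ)
         else sgn z * δ * Sval lam β (c k) z)) :=
  directional_derivative_partial_sorted_l1_general lam β c h_cover k hε_pos
    (fun i j _ _ => hε_sep i j) (fun i _ => hε_min i) z hδ
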